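/- arXiv:1808.00285 — 5 statements merged into one kernel-verified Lean document; each statement's English description precedes it below -/
import Mathlib

section
/- Let 0 < m < M, let f : [m,M] → (0,∞) be continuous and log-convex, let A be a bounded self-adjoint operator on a complex Hilbert space H with mI ≤ A ≤ MI, and let φ : B(H) → B(K) be a normalized positive linear map. Set μ(m,M,f) = max_{m ≤ t ≤ M} (1/f(t)) · (((M-t)f(m) + (t-m)f(M))/(M-m)). Then (1/μ(m,M,f)) · φ(f(A)) ≤ (1/μ(m,M,f)) · φ((f(M)^{A-m} f(m)^{M-A})^{1/(M-m)}) ≤ f(φ(A)) ≤ (f(M)^{φ(A)-m} f(m)^{M-φ(A)})^{1/(M-m)} ≤ μ(m,M,f) · φ(f(A)), where all operator functions are taken in the continuous functional calculus. -/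
/-!
On `[m, M]` let `L` be the chord of `f` and `g` the log-linear interpolant of `f` (the exponential
of the chord of `log f`). Log-convexity gives `f ≤ g`, the weighted AM-GM inequality gives `g ≤ L`,
and `L ≤ μ f` by definition of `μ`. Since `L` is affine and `φ` is linear and unital,
`φ (L(A)) = L(φ(A))`. Both `A` and `φ A` have spectrum in `[m, M]`, so the scalar inequalities
transfer to operators through the functional calculus, and all four bounds follow, with
`φ (L(A)) = L(φ(A))` as the bridge in the second and the fourth.
-/

/-- The value of the log-linear interpolant as a weighted geometric mean of the end-point values. -/
lemma geom_interp_eq {m M a b t : ℝ} (ha : 0 < a) (hb : 0 < b) :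
    (b ^ (t - m) * a ^ (M - t)) ^ (1 / (M - m)) =
      a ^ ((M - t) / (M - m)) * b ^ ((t - m) / (M - m)) := by
  rw [Real.mul_rpow (Real.rpow_nonneg hb.le _) (Real.rpow_nonneg ha.le _),
    ← Real.rpow_mul hb.le, ← Real.rpow_mul ha.le, mul_one_div, mul_one_div, mul_comm]

lemma geom_interp_le_chord {m M a b t : ℝ} (hmM : m < M) (ha : 0 < a) (hb : 0 < b)
    (ht : t ∈ Set.Icc m M) :
    (b ^ (t - m) * a ^ (M - t)) ^ (1 / (M - m)) ≤
      ((M - t) * a + (t - m) * b) / (M - m) := by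
  have hd : 0 < M - m := sub_pos.2 hmM
  rw [geom_interp_eq ha hb]
  have h := Real.geom_mean_le_arith_mean2_weighted
    (div_nonneg (sub_nonneg.2 ht.2) hd.le) (div_nonneg (sub_nonneg.2 ht.1) hd.le) ha.le hb.le
    (by field_simp; ring)
  calc _ ≤ _ := h
    _ = _ := by ring

lemma le_geom_interp {m M t : ℝ} {f : ℝ → ℝ} (hmM : m < M)
    (hf_pos : ∀ t ∈ Set.Icc m M, 0 < f t)
    (hf : ConvexOn ℝ (Set.Icc m M) (fun t => Real.log (f t))) (ht : t ∈ Set.Icc m M) :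
    f t ≤ (f M ^ (t - m) * f m ^ (M - t)) ^ (1 / (M - m)) := by
  have hd : 0 < M - m := sub_pos.2 hmM
  have hm := Set.left_mem_Icc.2 hmM.le
  have hM := Set.right_mem_Icc.2 hmM.le
  have ha := hf_pos m hm
  have hb := hf_pos M hM
  rw [geom_interp_eq ha hb, ← Real.log_le_log_iff (hf_pos t ht) (by positivity),
    Real.log_mul (by positivity) (by positivity), Real.log_rpow ha, Real.log_rpow hb]
  have h := hf.2 hm hM (div_nonneg (sub_nonneg.2 ht.2) hd.le)
    (div_nonneg (sub_nonneg.2 ht.1) hd.le) (by field_simp; ring)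
  have e : ((M - t) / (M - m)) • m + ((t - m) / (M - m)) • M = t := by
    simp only [smul_eq_mul]; field_simp; ring
  rw [e] at h
  simpa only [smul_eq_mul] using h

lemma continuous_geom_interp {m M a b : ℝ} (ha : 0 < a) (hb : 0 < b) :
    Continuous fun t : ℝ => (b ^ (t - m) * a ^ (M - t)) ^ (1 / (M - m)) := by
  simp only [geom_interp_eq ha hb]
  have h1 : Continuous fun t : ℝ => a ^ ((M - t) / (M - m)) :=
    Continuous.rpow continuous_const (by fun_prop) fun _ => Or.inl ha.ne'
  have h2 : Continuous fun t : ℝ => b ^ ((t - m) / (M - m)) :=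
    Continuous.rpow continuous_const (by fun_prop) fun _ => Or.inl hb.ne'
  exact h1.mul h2

section Operators

variable {H : Type*} [NormedAddCommGroup H] [InnerProductSpace ℂ H] [CompleteSpace H]

lemma spectrum_subset_Icc_of_le {m M : ℝ} {A : H →L[ℂ] H} (hA : IsSelfAdjoint A)
    (h₁ : m • (1 : H →L[ℂ] H) ≤ A) (h₂ : A ≤ M • (1 : H →L[ℂ] H)) :
    spectrum ℝ A ⊆ Set.Icc m M := by
  rw [← Algebra.algebraMap_eq_smul_one] at h₁ h₂
  intro x hx
  exact ⟨(algebraMap_le_iff_le_spectrum (R := ℝ) (a := A)).1 h₁ x hx,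
    (le_algebraMap_iff_spectrum_le (R := ℝ) (a := A)).1 h₂ x hx⟩

lemma cfc_affine (p q : ℝ) {A : H →L[ℂ] H} (hA : IsSelfAdjoint A) :
    cfc (fun t : ℝ => p + q * t) A = p • (1 : H →L[ℂ] H) + q • A := by
  rw [cfc_const_add p (fun t : ℝ => q * t) A (by fun_prop) hA, cfc_const_mul_id q A hA,
    Algebra.algebraMap_eq_smul_one]

end Operators


theorem mu_ratio_bounds_for_log_convex_positive_map
    {H K : Type*} [NormedAddCommGroup H] [InnerProductSpace ℂ H] [CompleteSpace H]
    [NormedAddCommGroup K] [InnerProductSpace ℂ K] [CompleteSpace K]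
    (m M : ℝ) (hm : 0 < m) (hmM : m < M)
    (f : ℝ → ℝ) (hf_cont : ContinuousOn f (Set.Icc m M))
    (hf_pos : ∀ t ∈ Set.Icc m M, 0 < f t)
    (hf_logconv : ConvexOn ℝ (Set.Icc m M) (fun t => Real.log (f t)))
    (A : H →L[ℂ] H) (hA : IsSelfAdjoint A)
    (hA₁ : m • (1 : H →L[ℂ] H) ≤ A) (hA₂ : A ≤ M • (1 : H →L[ℂ] H))
    (φ : (H →L[ℂ] H) →ₗ[ℂ] (K →L[ℂ] K))
    (hφ_pos : ∀ X : H →L[ℂ] H, 0 ≤ X → 0 ≤ φ X)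
    (hφ_one : φ 1 = 1)
    (μ : ℝ)
    (hμ : IsGreatest
      ((fun t => (((M - t) * f m + (t - m) * f M) / (M - m)) / f t) '' Set.Icc m M) μ) :
    μ⁻¹ • φ (cfc f A) ≤
        μ⁻¹ • φ (cfc (fun t : ℝ => (f M ^ (t - m) * f m ^ (M - t)) ^ (1 / (M - m))) A) ∧
      μ⁻¹ • φ (cfc (fun t : ℝ => (f M ^ (t - m) * f m ^ (M - t)) ^ (1 / (M - m))) A) ≤
        cfc f (φ A) ∧
      cfc f (φ A) ≤
        cfc (fun t : ℝ => (f M ^ (t - m) * f m ^ (M - t)) ^ (1 / (M - m))) (φ A) ∧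
      cfc (fun t : ℝ => (f M ^ (t - m) * f m ^ (M - t)) ^ (1 / (M - m))) (φ A) ≤
        μ • φ (cfc f A) := by
  have hd : 0 < M - m := sub_pos.2 hmM
  have hmI := Set.left_mem_Icc.2 hmM.le
  have ha := hf_pos m hmI
  have hb := hf_pos M (Set.right_mem_Icc.2 hmM.le)
  -- At `t = m` the ratio equals `1`, so `1 ≤ μ`.
  have hμ1 : 1 ≤ μ := hμ.2 ⟨m, hmI, by
    have := ha.ne'
    have := hd.ne'
    simp only [sub_self, zero_mul, add_zero]
    field_simp⟩
  have hμ0 : 0 < μ := one_pos.trans_le hμ1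
  have hφ_mono : ∀ X Y : H →L[ℂ] H, X ≤ Y → φ X ≤ φ Y := fun X Y h => by
    have := hφ_pos (Y - X) (sub_nonneg.2 h)
    rwa [map_sub, sub_nonneg] at this
  have hφ_smul : ∀ (r : ℝ) (X : H →L[ℂ] H), φ (r • X) = r • φ X :=
    fun r X => φ.map_smul_of_tower r X
  have hB₁ : m • (1 : K →L[ℂ] K) ≤ φ A := by
    simpa [hφ_smul, hφ_one] using hφ_mono _ _ hA₁
  have hB₂ : φ A ≤ M • (1 : K →L[ℂ] K) := by
    simpa [hφ_smul, hφ_one] using hφ_mono _ _ hA₂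
  have hB : IsSelfAdjoint (φ A) := by
    have h1 : IsSelfAdjoint (φ A - m • (1 : K →L[ℂ] K)) :=
      IsSelfAdjoint.of_nonneg (sub_nonneg.2 hB₁)
    have h2 : IsSelfAdjoint (m • (1 : K →L[ℂ] K)) :=
      (IsSelfAdjoint.all m).smul (IsSelfAdjoint.one _)
    simpa using h1.add h2
  have sA := spectrum_subset_Icc_of_le hA hA₁ hA₂
  have sB := spectrum_subset_Icc_of_le hB hB₁ hB₂
  set g : ℝ → ℝ := fun t => (f M ^ (t - m) * f m ^ (M - t)) ^ (1 / (M - m)) with hg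
  have hgc : Continuous g := continuous_geom_interp ha hb
  -- The chord, written in slope-intercept form so that its functional calculus is explicit.
  set p : ℝ := (M * f m - m * f M) / (M - m) with hp
  set q : ℝ := (f M - f m) / (M - m) with hq
  have hL : ∀ t, ((M - t) * f m + (t - m) * f M) / (M - m) = p + q * t := fun t => by
    rw [hp, hq]; ring
  have hfg : ∀ t ∈ Set.Icc m M, f t ≤ g t := fun t ht => le_geom_interp hmM hf_pos hf_logconv ht
  have hgL : ∀ t ∈ Set.Icc m M, g t ≤ p + q * t := fun t ht => by
    rw [← hL]; exact geom_interp_le_chord hmM ha hb ht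
  have hLf : ∀ t ∈ Set.Icc m M, p + q * t ≤ μ * f t := fun t ht => by
    rw [← hL, ← div_le_iff₀ (hf_pos t ht)]
    exact hμ.2 ⟨t, ht, rfl⟩
  have hbridge : φ (cfc (fun t : ℝ => p + q * t) A) = cfc (fun t : ℝ => p + q * t) (φ A) := by
    rw [cfc_affine p q hA, cfc_affine p q hB, map_add, hφ_smul, hφ_smul, hφ_one]
  have fA : ContinuousOn f (spectrum ℝ A) := hf_cont.mono sA
  have fB : ContinuousOn f (spectrum ℝ (φ A)) := hf_cont.mono sB
  refine ⟨?_, ?_, ?_, ?_⟩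
  · exact smul_le_smul_of_nonneg_left
      (hφ_mono _ _ (cfc_mono (fun t ht => hfg t (sA ht)) fA hgc.continuousOn))
      (inv_nonneg.2 hμ0.le)
  · have h1 : φ (cfc g A) ≤ μ • cfc f (φ A) := by
      calc φ (cfc g A) ≤ φ (cfc (fun t : ℝ => p + q * t) A) :=
            hφ_mono _ _ (cfc_mono (fun t ht => hgL t (sA ht)) hgc.continuousOn (by fun_prop))
        _ = cfc (fun t : ℝ => p + q * t) (φ A) := hbridge
        _ ≤ cfc (fun t : ℝ => μ * f t) (φ A) :=
            cfc_mono (fun t ht => hLf t (sB ht)) (by fun_prop) (by fun_prop)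
        _ = μ • cfc f (φ A) := cfc_const_mul μ f (φ A) fB
    calc μ⁻¹ • φ (cfc g A) ≤ μ⁻¹ • μ • cfc f (φ A) :=
          smul_le_smul_of_nonneg_left h1 (inv_nonneg.2 hμ0.le)
      _ = cfc f (φ A) := inv_smul_smul₀ hμ0.ne' _
  · exact cfc_mono (fun t ht => hfg t (sB ht)) fB hgc.continuousOn
  · calc cfc g (φ A) ≤ cfc (fun t : ℝ => p + q * t) (φ A) :=
          cfc_mono (fun t ht => hgL t (sB ht)) hgc.continuousOn (by fun_prop)
      _ = φ (cfc (fun t : ℝ => p + q * t) A) := hbridge.symm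
      _ ≤ φ (cfc (fun t : ℝ => μ * f t) A) :=
          hφ_mono _ _ (cfc_mono (fun t ht => hLf t (sA ht)) (by fun_prop) (by fun_prop))
      _ = μ • φ (cfc f A) := by rw [cfc_const_mul μ f A fA, hφ_smul]
end

section
/- Let 0 < m < M, let A be a bounded self-adjoint operator on a complex Hilbert space H with mI ≤ A ≤ MI, let φ : B(H) → B(K) be a normalized positive linear map, and let t < 0. Then (1/K(m,M,t)) · φ(A^t) ≤ (1/K(m,M,t)) · φ((M^{A-m} m^{M-A})^{t/(M-m)}) ≤ (φ(A))^t ≤ (M^{φ(A)-m} m^{M-φ(A)})^{t/(M-m)} ≤ K(m,M,t) · φ(A^t), where K(m,M,t) = ((m M^t − M m^t)/((t−1)(M−m))) · (((t−1)/t) · (M^t − m^t)/(m M^t − M m^t))^t is the generalized Kantorovich constant. -/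
/-!
Write `f s = s ^ t`, let `g` be the log-linear interpolation
`(M ^ (s - m) * m ^ (M - s)) ^ (t / (M - m))` of `f` at the points `m, M`, and let `L s = b + a * s`
be the chord of `f` over `[m, M]`. The weighted AM-GM inequality gives `f ≤ g ≤ L` on `[m, M]`, and
`L ≤ Kc * f` on the whole positive half-line: `L` is a multiple of the tangent line of `f` at the point
`s₀ = t * b / ((1 - t) * a)` where `L / f` is maximal, and `f` is convex.

Since `L` is affine and `φ` is linear and unital, `φ (L(A)) = L(φ(A))`. The spectra of `A` and `φ(A)`
lie in `[m, M]`, so the scalar inequalities pass through the functional calculus: `f ≤ g` gives the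
first and third bounds, and the middle and last ones are
`φ(g(A)) ≤ φ(L(A)) = L(φ(A)) ≤ Kc • f(φ(A))` and `g(φ(A)) ≤ L(φ(A)) = φ(L(A)) ≤ Kc • φ(f(A))`.
-/

/-- Bernoulli's inequality for negative exponents: `x ^ t` lies above its tangent line at `1`. -/
lemma one_add_mul_sub_one_le_rpow {t x : ℝ} (ht : t < 0) (hx : 0 < x) :
    1 + t * (x - 1) ≤ x ^ t := by
  rw [Real.rpow_def_of_pos hx]
  have h1 := Real.add_one_le_exp (Real.log x * t)
  have h2 := Real.log_le_sub_one_of_pos hx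
  nlinarith

/-- An affine function `b + a * s` with `b > 0 > a` is dominated by a multiple of `s ^ t`, the constant
being the maximum of their quotient, which is attained at `s₀ = t * b / ((1 - t) * a)`. -/
lemma affine_le_const_mul_rpow {a b t s : ℝ} (ha : a < 0) (hb : 0 < b) (ht : t < 0) (hs : 0 < s) :
    b + a * s ≤ b / (1 - t) * ((1 - t) * a / (t * b)) ^ t * s ^ t := by
  have hr : 0 < (1 - t) * a / (t * b) :=
    div_pos_of_neg_of_neg (by nlinarith) (by nlinarith)
  have h1t : 0 < 1 - t := by linarith
  rw [mul_assoc, ← Real.mul_rpow hr.le hs.le]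
  have h := one_add_mul_sub_one_le_rpow ht (mul_pos hr hs)
  have h2 := mul_le_mul_of_nonneg_left h (div_pos hb h1t).le
  refine le_trans (le_of_eq ?_) h2
  have ht0 : t ≠ 0 := ht.ne
  field_simp
  ring

lemma interpolation_eq {m M t s : ℝ} (hm : 0 < m) (hmM : m < M) :
    (M ^ (s - m) * m ^ (M - s)) ^ (t / (M - m)) =
      (M ^ ((s - m) / (M - m)) * m ^ ((M - s) / (M - m))) ^ t := by
  have hM : 0 < M := hm.trans hmM
  rw [Real.mul_rpow (by positivity) (by positivity), Real.mul_rpow (by positivity) (by positivity),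
    ← Real.rpow_mul hM.le, ← Real.rpow_mul hm.le, ← Real.rpow_mul hM.le, ← Real.rpow_mul hm.le]
  congr 2 <;> ring

lemma rpow_le_interpolation {m M t s : ℝ} (hm : 0 < m) (hmM : m < M) (ht : t < 0)
    (h1 : m ≤ s) (h2 : s ≤ M) :
    s ^ t ≤ (M ^ (s - m) * m ^ (M - s)) ^ (t / (M - m)) := by
  have hM : 0 < M := hm.trans hmM
  have hd : 0 < M - m := by linarith
  rw [interpolation_eq hm hmM]
  refine Real.rpow_le_rpow_of_nonpos (by positivity) ?_ ht.le
  refine (Real.geom_mean_le_arith_mean2_weighted (div_nonneg (by linarith) hd.le)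
    (div_nonneg (by linarith) hd.le) hM.le hm.le (by field_simp; ring)).trans (le_of_eq ?_)
  field_simp
  ring

lemma interpolation_le_chord {m M t s : ℝ} (hm : 0 < m) (hmM : m < M)
    (h1 : m ≤ s) (h2 : s ≤ M) :
    (M ^ (s - m) * m ^ (M - s)) ^ (t / (M - m)) ≤
      (M * m ^ t - m * M ^ t) / (M - m) + (M ^ t - m ^ t) / (M - m) * s := by
  have hM : 0 < M := hm.trans hmM
  have hd : 0 < M - m := by linarith
  rw [interpolation_eq hm hmM, Real.mul_rpow (by positivity) (by positivity),
    ← Real.rpow_mul hM.le, ← Real.rpow_mul hm.le, mul_comm _ t, mul_comm _ t,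
    Real.rpow_mul hM.le, Real.rpow_mul hm.le]
  refine (Real.geom_mean_le_arith_mean2_weighted (div_nonneg (by linarith) hd.le)
    (div_nonneg (by linarith) hd.le) (by positivity) (by positivity)
    (by field_simp; ring)).trans (le_of_eq ?_)
  field_simp
  ring


theorem kantorovich_bounds_for_negative_power_positive_map
    {H K : Type*} [NormedAddCommGroup H] [InnerProductSpace ℂ H] [CompleteSpace H]
    [NormedAddCommGroup K] [InnerProductSpace ℂ K] [CompleteSpace K]
    (m M : ℝ) (hm : 0 < m) (hmM : m < M)
    (A : H →L[ℂ] H) (hA : IsSelfAdjoint A)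
    (hA₁ : m • (1 : H →L[ℂ] H) ≤ A) (hA₂ : A ≤ M • (1 : H →L[ℂ] H))
    (φ : (H →L[ℂ] H) →ₗ[ℂ] (K →L[ℂ] K))
    (hφ_pos : ∀ X : H →L[ℂ] H, 0 ≤ X → 0 ≤ φ X)
    (hφ_one : φ 1 = 1)
    (t : ℝ) (ht : t < 0)
    (Kc : ℝ)
    (hKc : Kc = (m * M ^ t - M * m ^ t) / ((t - 1) * (M - m)) *
      ((t - 1) / t * ((M ^ t - m ^ t) / (m * M ^ t - M * m ^ t))) ^ t) :
    Kc⁻¹ • φ (cfc (fun s : ℝ => s ^ t) A) ≤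
        Kc⁻¹ • φ (cfc (fun s : ℝ => (M ^ (s - m) * m ^ (M - s)) ^ (t / (M - m))) A) ∧
      Kc⁻¹ • φ (cfc (fun s : ℝ => (M ^ (s - m) * m ^ (M - s)) ^ (t / (M - m))) A) ≤
        cfc (fun s : ℝ => s ^ t) (φ A) ∧
      cfc (fun s : ℝ => s ^ t) (φ A) ≤
        cfc (fun s : ℝ => (M ^ (s - m) * m ^ (M - s)) ^ (t / (M - m))) (φ A) ∧
      cfc (fun s : ℝ => (M ^ (s - m) * m ^ (M - s)) ^ (t / (M - m))) (φ A) ≤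
        Kc • φ (cfc (fun s : ℝ => s ^ t) A) := by
  have hM : 0 < M := hm.trans hmM
  have hd : 0 < M - m := by linarith
  have hlt : M ^ t < m ^ t := Real.rpow_lt_rpow_of_neg hm hmM ht
  have hMt : 0 < M ^ t := by positivity
  set a : ℝ := (M ^ t - m ^ t) / (M - m) with ha_def
  set b : ℝ := (M * m ^ t - m * M ^ t) / (M - m) with hb_def
  have ha : a < 0 := div_neg_of_neg_of_pos (by linarith) hd
  have hbn : 0 < M * m ^ t - m * M ^ t := by nlinarith
  have hb : 0 < b := div_pos hbn hd
  have h1t : 0 < 1 - t := by linarith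
  have hr : 0 < (1 - t) * a / (t * b) :=
    div_pos_of_neg_of_neg (by nlinarith) (by nlinarith)
  -- the Kantorovich constant in terms of the coefficients of the chord
  have hKc' : Kc = b / (1 - t) * ((1 - t) * a / (t * b)) ^ t := by
    have e0 : m * M ^ t - M * m ^ t = -(b * (M - m)) := by
      rw [hb_def]; field_simp; ring
    have e1 : M ^ t - m ^ t = a * (M - m) := by
      rw [ha_def]; field_simp
    have ht1 : t - 1 ≠ 0 := by linarith
    rw [hKc, e0, e1]
    congr 1
    · rw [← neg_sub 1 t]; field_simp
    · congr 1
      field_simp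
      ring
  have hK : 0 < Kc := by rw [hKc']; positivity
  have hmono : ∀ X Y : H →L[ℂ] H, X ≤ Y → φ X ≤ φ Y := fun X Y h => by
    have := hφ_pos (Y - X) (sub_nonneg.2 h)
    rwa [map_sub, sub_nonneg] at this
  have hreal : ∀ (c : ℝ) (X : H →L[ℂ] H), φ (c • X) = c • φ X :=
    fun c X => φ.map_smul_of_tower c X
  have hB₁ : m • (1 : K →L[ℂ] K) ≤ φ A := by
    simpa [hreal, hφ_one] using hmono _ _ hA₁
  have hB₂ : φ A ≤ M • (1 : K →L[ℂ] K) := by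
    simpa [hreal, hφ_one] using hmono _ _ hA₂
  have hB : IsSelfAdjoint (φ A) := by
    have h0 : (0 : K →L[ℂ] K) ≤ φ A :=
      hφ_pos A ((smul_nonneg hm.le zero_le_one).trans hA₁)
    exact h0.isSelfAdjoint
  have hsA : ∀ s ∈ spectrum ℝ A, m ≤ s ∧ s ≤ M := fun s hs =>
    ⟨(algebraMap_le_iff_le_spectrum hA).1 (by rwa [Algebra.algebraMap_eq_smul_one]) s hs,
      (le_algebraMap_iff_spectrum_le hA).1 (by rwa [Algebra.algebraMap_eq_smul_one]) s hs⟩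
  have hsB : ∀ s ∈ spectrum ℝ (φ A), m ≤ s ∧ s ≤ M := fun s hs =>
    ⟨(algebraMap_le_iff_le_spectrum hB).1 (by rwa [Algebra.algebraMap_eq_smul_one]) s hs,
      (le_algebraMap_iff_spectrum_le hB).1 (by rwa [Algebra.algebraMap_eq_smul_one]) s hs⟩
  have hf : ∀ S : Set ℝ, (∀ s ∈ S, m ≤ s ∧ s ≤ M) → ContinuousOn (fun s : ℝ => s ^ t) S :=
    fun S hS => continuousOn_id.rpow_const fun s hs => Or.inl (hm.trans_le (hS s hs).1).ne'
  have hg : Continuous (fun s : ℝ => (M ^ (s - m) * m ^ (M - s)) ^ (t / (M - m))) := by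
    refine Continuous.rpow_const ?_ fun s => Or.inl (by positivity)
    exact (continuous_const.rpow (by fun_prop) fun s => Or.inl hM.ne').mul
      (continuous_const.rpow (by fun_prop) fun s => Or.inl hm.ne')
  have hL : Continuous (fun s : ℝ => b + a * s) := by fun_prop
  have hcross : cfc (fun s : ℝ => b + a * s) (φ A) = φ (cfc (fun s : ℝ => b + a * s) A) := by
    rw [cfc_const_add b (fun s => a * s) A, cfc_const_add b (fun s => a * s) (φ A),
      cfc_const_mul_id a A, cfc_const_mul_id a (φ A), map_add, hreal,
      Algebra.algebraMap_eq_smul_one, Algebra.algebraMap_eq_smul_one, hreal, hφ_one]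
  have hLf : ∀ s : ℝ, m ≤ s ∧ s ≤ M → b + a * s ≤ Kc * s ^ t := fun s hs => by
    rw [hKc']
    exact affine_le_const_mul_rpow ha hb ht (hm.trans_le hs.1)
  have hfgA : cfc (fun s : ℝ => s ^ t) A ≤
      cfc (fun s : ℝ => (M ^ (s - m) * m ^ (M - s)) ^ (t / (M - m))) A :=
    cfc_mono (fun s hs => rpow_le_interpolation hm hmM ht (hsA s hs).1 (hsA s hs).2)
      (hf _ hsA) hg.continuousOn
  have hfgB : cfc (fun s : ℝ => s ^ t) (φ A) ≤
      cfc (fun s : ℝ => (M ^ (s - m) * m ^ (M - s)) ^ (t / (M - m))) (φ A) :=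
    cfc_mono (fun s hs => rpow_le_interpolation hm hmM ht (hsB s hs).1 (hsB s hs).2)
      (hf _ hsB) hg.continuousOn
  have hgLA : cfc (fun s : ℝ => (M ^ (s - m) * m ^ (M - s)) ^ (t / (M - m))) A ≤
      cfc (fun s : ℝ => b + a * s) A :=
    cfc_mono (fun s hs => interpolation_le_chord hm hmM (hsA s hs).1 (hsA s hs).2)
      hg.continuousOn hL.continuousOn
  have hgLB : cfc (fun s : ℝ => (M ^ (s - m) * m ^ (M - s)) ^ (t / (M - m))) (φ A) ≤
      cfc (fun s : ℝ => b + a * s) (φ A) :=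
    cfc_mono (fun s hs => interpolation_le_chord hm hmM (hsB s hs).1 (hsB s hs).2)
      hg.continuousOn hL.continuousOn
  have hLfA : cfc (fun s : ℝ => b + a * s) A ≤ Kc • cfc (fun s : ℝ => s ^ t) A := by
    rw [← cfc_const_mul Kc (fun s : ℝ => s ^ t) A (hf _ hsA)]
    exact cfc_mono (fun s hs => hLf s (hsA s hs)) hL.continuousOn ((hf _ hsA).const_mul Kc)
  have hLfB : cfc (fun s : ℝ => b + a * s) (φ A) ≤ Kc • cfc (fun s : ℝ => s ^ t) (φ A) := by
    rw [← cfc_const_mul Kc (fun s : ℝ => s ^ t) (φ A) (hf _ hsB)]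
    exact cfc_mono (fun s hs => hLf s (hsB s hs)) hL.continuousOn ((hf _ hsB).const_mul Kc)
  refine ⟨?_, ?_, hfgB, ?_⟩
  · exact smul_le_smul_of_nonneg_left (hmono _ _ hfgA) (inv_pos.2 hK).le
  · have h := smul_le_smul_of_nonneg_left
      ((hmono _ _ hgLA).trans (hcross.symm.le.trans hLfB)) (inv_pos.2 hK).le
    rwa [inv_smul_smul₀ hK.ne'] at h
  · rw [← hreal]
    exact hgLB.trans (hcross.le.trans (hmono _ _ hLfA))
end

section
/- Let 0 < m < M, let A, B be positive invertible bounded operators on a complex Hilbert space H with m·A ≤ B ≤ M·A, let f : [m,M] → (0,∞) be continuous and log-convex, and let φ : B(H) → B(K) be a positive linear map (not necessarily normalized) such that φ(A) is positive and invertible. Write A δ B = A^{-1/2} B A^{-1/2} and A σ_f B = A^{1/2} f(A^{-1/2} B A^{-1/2}) A^{1/2}, and set μ(m,M,f) = max_{m ≤ t ≤ M} (1/f(t)) · (((M-t)f(m) + (t-m)f(M))/(M-m)). Then (1/μ(m,M,f)) · φ(A σ_f B) ≤ (1/μ(m,M,f)) · φ(A^{1/2} (f(M)^{AδB−m} f(m)^{M−AδB})^{1/(M-m)}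 A^{1/2}) ≤ φ(A) σ_f φ(B) ≤ φ(A)^{1/2} (f(M)^{φ(A)δφ(B)−m} f(m)^{M−φ(A)δφ(B)})^{1/(M-m)} φ(A)^{1/2} ≤ μ(m,M,f) · φ(A σ_f B). -/
/-!
Let `g` be the log-linear interpolant of `f` at the endpoints of `[m, M]` and `L` the affine one
(the chord). Log-convexity, the weighted AM-GM inequality and the definition of `μ` give
`f ≤ g ≤ L ≤ μ f` on `[m, M]` (`le_logInterp`, `logInterp_le_chord`). Since `m A ≤ B ≤ M A`
confines the spectrum of `A δ B` to `[m, M]` (`spectrum_opDelta_subset`), these scalar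
inequalities become operator inequalities between the means `A σ_h B` (`opSigma_mono`). By
positivity of `φ`, the pair `φ(A), φ(B)` satisfies the same bounds, so the inequalities hold
for it too.

The two sides of `φ` are linked by the chord: `A σ_L B` is a linear combination of `A` and `B`
(`opSigma_affine`), hence `φ(A σ_L B) = φ(A) σ_L φ(B)`. The second and fourth inequalities are
`φ(A σ_g B) ≤ φ(A σ_L B) = φ(A) σ_L φ(B) ≤ μ φ(A) σ_f φ(B)` and
`φ(A) σ_g φ(B) ≤ φ(A) σ_L φ(B) = φ(A σ_L B) ≤ μ φ(A σ_f B)`.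
-/

noncomputable def opSqrt {H : Type*} [NormedAddCommGroup H] [InnerProductSpace ℂ H]
    [CompleteSpace H] (A : H →L[ℂ] H) : H →L[ℂ] H :=
  cfc (fun s : ℝ => s ^ ((1 : ℝ) / 2)) A

noncomputable def opInvSqrt {H : Type*} [NormedAddCommGroup H] [InnerProductSpace ℂ H]
    [CompleteSpace H] (A : H →L[ℂ] H) : H →L[ℂ] H :=
  cfc (fun s : ℝ => s ^ (-(1 : ℝ) / 2)) A

/-- `A δ B = A^{-1/2} B A^{-1/2}`. -/
noncomputable def opDelta {H : Type*} [NormedAddCommGroup H] [InnerProductSpace ℂ H]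
    [CompleteSpace H] (A B : H →L[ℂ] H) : H →L[ℂ] H :=
  opInvSqrt A * B * opInvSqrt A

/-- `A σ_f B = A^{1/2} f(A^{-1/2} B A^{-1/2}) A^{1/2}`. -/
noncomputable def opSigma {H : Type*} [NormedAddCommGroup H] [InnerProductSpace ℂ H]
    [CompleteSpace H] (f : ℝ → ℝ) (A B : H →L[ℂ] H) : H →L[ℂ] H :=
  opSqrt A * cfc f (opDelta A B) * opSqrt A

section Operators

variable {H : Type*} [NormedAddCommGroup H] [InnerProductSpace ℂ H] [CompleteSpace H]

lemma pos_of_mem_spectrum {A : H →L[ℂ] H} (hA : 0 ≤ A) (hAu : IsUnit A) {x : ℝ}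
    (hx : x ∈ spectrum ℝ A) : 0 < x :=
  lt_of_le_of_ne (spectrum_nonneg_of_nonneg hA hx)
    fun h => spectrum.zero_notMem ℝ hAu (h ▸ hx)

lemma continuousOn_rpow_spectrum {A : H →L[ℂ] H} (hA : 0 ≤ A) (hAu : IsUnit A) (r : ℝ) :
    ContinuousOn (fun s : ℝ => s ^ r) (spectrum ℝ A) := fun _ hx =>
  (Real.continuousAt_rpow_const _ r (Or.inl (pos_of_mem_spectrum hA hAu hx).ne')).continuousWithinAt

lemma isSelfAdjoint_opSqrt (A : H →L[ℂ] H) : IsSelfAdjoint (opSqrt A) := cfc_predicate _ A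

lemma isSelfAdjoint_opInvSqrt (A : H →L[ℂ] H) : IsSelfAdjoint (opInvSqrt A) := cfc_predicate _ A

lemma opSqrt_mul_opSqrt {A : H →L[ℂ] H} (hA : 0 ≤ A) (hAu : IsUnit A) :
    opSqrt A * opSqrt A = A := by
  have hsa : IsSelfAdjoint A := .of_nonneg hA
  have hc := continuousOn_rpow_spectrum hA hAu ((1 : ℝ) / 2)
  rw [opSqrt, ← cfc_mul _ _ A hc hc]
  conv_rhs => rw [← cfc_id' ℝ A]
  refine cfc_congr fun x hx => ?_
  have := pos_of_mem_spectrum hA hAu hx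
  rw [← Real.rpow_add this]
  norm_num

lemma opSqrt_mul_opInvSqrt {A : H →L[ℂ] H} (hA : 0 ≤ A) (hAu : IsUnit A) :
    opSqrt A * opInvSqrt A = 1 := by
  have hsa : IsSelfAdjoint A := .of_nonneg hA
  rw [opSqrt, opInvSqrt, ← cfc_mul _ _ A (continuousOn_rpow_spectrum hA hAu _)
    (continuousOn_rpow_spectrum hA hAu _), ← cfc_one ℝ A]
  refine cfc_congr fun x hx => ?_
  have := pos_of_mem_spectrum hA hAu hx
  simp only [Pi.one_apply]
  rw [← Real.rpow_add this]
  norm_num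

lemma opInvSqrt_mul_opSqrt {A : H →L[ℂ] H} (hA : 0 ≤ A) (hAu : IsUnit A) :
    opInvSqrt A * opSqrt A = 1 := by
  have h := congrArg star (opSqrt_mul_opInvSqrt hA hAu)
  rwa [star_mul, (isSelfAdjoint_opSqrt A).star_eq, (isSelfAdjoint_opInvSqrt A).star_eq,
    star_one] at h

lemma opDelta_self {A : H →L[ℂ] H} (hA : 0 ≤ A) (hAu : IsUnit A) : opDelta A A = 1 := by
  calc opInvSqrt A * A * opInvSqrt A
      = opInvSqrt A * (opSqrt A * opSqrt A) * opInvSqrt A := by rw [opSqrt_mul_opSqrt hA hAu]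
    _ = (opInvSqrt A * opSqrt A) * (opSqrt A * opInvSqrt A) := by noncomm_ring
    _ = 1 := by rw [opInvSqrt_mul_opSqrt hA hAu, opSqrt_mul_opInvSqrt hA hAu, one_mul]

lemma opSqrt_mul_opDelta_mul_opSqrt {A : H →L[ℂ] H} (hA : 0 ≤ A) (hAu : IsUnit A)
    (B : H →L[ℂ] H) : opSqrt A * opDelta A B * opSqrt A = B := by
  calc opSqrt A * (opInvSqrt A * B * opInvSqrt A) * opSqrt A
      = (opSqrt A * opInvSqrt A) * B * (opInvSqrt A * opSqrt A) := by noncomm_ring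
    _ = B := by rw [opInvSqrt_mul_opSqrt hA hAu, opSqrt_mul_opInvSqrt hA hAu, one_mul, mul_one]

lemma opDelta_mono (A : H →L[ℂ] H) {B C : H →L[ℂ] H} (h : B ≤ C) : opDelta A B ≤ opDelta A C :=
  (isSelfAdjoint_opInvSqrt A).conjugate_le_conjugate h

lemma opDelta_smul (A B : H →L[ℂ] H) (r : ℝ) : opDelta A (r • B) = r • opDelta A B := by
  simp only [opDelta, mul_smul_comm, smul_mul_assoc]

lemma isSelfAdjoint_opDelta (A : H →L[ℂ] H) {B : H →L[ℂ] H} (hB : IsSelfAdjoint B) :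
    IsSelfAdjoint (opDelta A B) := by
  have := hB.conjugate (opInvSqrt A)
  rwa [(isSelfAdjoint_opInvSqrt A).star_eq] at this

lemma spectrum_opDelta_subset {m M : ℝ} {A B : H →L[ℂ] H} (hA : 0 ≤ A) (hAu : IsUnit A)
    (hB : 0 ≤ B) (hmAB : m • A ≤ B) (hBMA : B ≤ M • A) :
    spectrum ℝ (opDelta A B) ⊆ Set.Icc m M := by
  have hsa : IsSelfAdjoint (opDelta A B) := isSelfAdjoint_opDelta A (.of_nonneg hB)
  have h1 := opDelta_mono A hmAB
  have h2 := opDelta_mono A hBMA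
  rw [opDelta_smul, opDelta_self hA hAu, ← Algebra.algebraMap_eq_smul_one] at h1 h2
  exact fun x hx => ⟨(algebraMap_le_iff_le_spectrum hsa).1 h1 x hx,
    (le_algebraMap_iff_spectrum_le hsa).1 h2 x hx⟩

lemma opSigma_mono {m M : ℝ} {A B : H →L[ℂ] H} (hA : 0 ≤ A) (hAu : IsUnit A)
    (hB : 0 ≤ B) (hmAB : m • A ≤ B) (hBMA : B ≤ M • A) {p q : ℝ → ℝ}
    (hp : ContinuousOn p (Set.Icc m M)) (hq : ContinuousOn q (Set.Icc m M))
    (hpq : ∀ t ∈ Set.Icc m M, p t ≤ q t) : opSigma p A B ≤ opSigma q A B := by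
  have hs := spectrum_opDelta_subset hA hAu hB hmAB hBMA
  exact (isSelfAdjoint_opSqrt A).conjugate_le_conjugate
    (cfc_mono (fun x hx => hpq x (hs hx)) (hp.mono hs) (hq.mono hs))

lemma opSigma_const_mul {m M : ℝ} {A B : H →L[ℂ] H} (hA : 0 ≤ A) (hAu : IsUnit A)
    (hB : 0 ≤ B) (hmAB : m • A ≤ B) (hBMA : B ≤ M • A) {p : ℝ → ℝ}
    (hp : ContinuousOn p (Set.Icc m M)) (c : ℝ) :
    opSigma (fun t => c * p t) A B = c • opSigma p A B := by
  have hs := spectrum_opDelta_subset hA hAu hB hmAB hBMA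
  rw [opSigma, opSigma, cfc_const_mul c p _ (hp.mono hs), mul_smul_comm, smul_mul_assoc]

/-- The mean attached to an affine function is linear in the two operators, so every linear map
carries it to the corresponding mean of the images. -/
lemma opSigma_affine {A B : H →L[ℂ] H} (hA : 0 ≤ A) (hAu : IsUnit A) (hB : 0 ≤ B) (a b : ℝ) :
    opSigma (fun t => a * t + b) A B = a • B + b • A := by
  have hsa : IsSelfAdjoint (opDelta A B) := isSelfAdjoint_opDelta A (.of_nonneg hB)
  have h : cfc (fun t : ℝ => a * t + b) (opDelta A B) = a • opDelta A B + b • 1 := by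
    rw [cfc_add_const b (fun t : ℝ => a * t) _ (by fun_prop) hsa,
      cfc_const_mul_id a _ hsa, Algebra.algebraMap_eq_smul_one]
  rw [opSigma, h, mul_add, add_mul, mul_smul_comm, smul_mul_assoc, mul_smul_comm,
    smul_mul_assoc, mul_one, opSqrt_mul_opDelta_mul_opSqrt hA hAu, opSqrt_mul_opSqrt hA hAu]

end Operators

section Scalar

variable {m M : ℝ} {f : ℝ → ℝ}

/-- The log-linear interpolant as a weighted geometric mean of the endpoint values. -/
lemma logInterp_eq (hm : 0 < f m) (hM : 0 < f M) (t : ℝ) :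
    (f M ^ (t - m) * f m ^ (M - t)) ^ (1 / (M - m)) =
      f m ^ ((M - t) / (M - m)) * f M ^ ((t - m) / (M - m)) := by
  rw [Real.mul_rpow (by positivity) (by positivity), ← Real.rpow_mul hM.le, ← Real.rpow_mul hm.le,
    mul_comm]
  simp only [mul_one_div]

lemma le_logInterp (hmM : m < M) (hf_pos : ∀ t ∈ Set.Icc m M, 0 < f t)
    (hf : ConvexOn ℝ (Set.Icc m M) (fun t => Real.log (f t))) {t : ℝ} (ht : t ∈ Set.Icc m M) :
    f t ≤ (f M ^ (t - m) * f m ^ (M - t)) ^ (1 / (M - m)) := by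
  have hd : 0 < M - m := sub_pos.2 hmM
  have hm := hf_pos m (Set.left_mem_Icc.2 hmM.le)
  have hM := hf_pos M (Set.right_mem_Icc.2 hmM.le)
  have h := hf.2 (Set.left_mem_Icc.2 hmM.le) (Set.right_mem_Icc.2 hmM.le)
    (div_nonneg (sub_nonneg.2 ht.2) hd.le) (div_nonneg (sub_nonneg.2 ht.1) hd.le)
    (by field_simp; ring)
  have e : ((M - t) / (M - m)) • m + ((t - m) / (M - m)) • M = t := by
    simp only [smul_eq_mul]; field_simp; ring
  simp only [e] at h
  rw [logInterp_eq hm hM, ← Real.log_le_log_iff (hf_pos t ht) (by positivity),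
    Real.log_mul (by positivity) (by positivity), Real.log_rpow hm, Real.log_rpow hM]
  exact h

lemma logInterp_le_chord (hmM : m < M) (hm : 0 < f m) (hM : 0 < f M) {t : ℝ}
    (ht : t ∈ Set.Icc m M) :
    (f M ^ (t - m) * f m ^ (M - t)) ^ (1 / (M - m)) ≤
      ((M - t) * f m + (t - m) * f M) / (M - m) := by
  have hd : 0 < M - m := sub_pos.2 hmM
  rw [logInterp_eq hm hM]
  refine (Real.geom_mean_le_arith_mean2_weighted (div_nonneg (sub_nonneg.2 ht.2) hd.le)
    (div_nonneg (sub_nonneg.2 ht.1) hd.le) hm.le hM.le (by field_simp; ring)).trans_eq ?_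
  ring

lemma continuous_logInterp (hm : 0 < f m) (hM : 0 < f M) :
    Continuous fun t : ℝ => (f M ^ (t - m) * f m ^ (M - t)) ^ (1 / (M - m)) := by
  simp only [logInterp_eq hm hM]
  exact (continuous_const.rpow (by fun_prop) fun _ => .inl hm.ne').mul
    (continuous_const.rpow (by fun_prop) fun _ => .inl hM.ne')

end Scalar

theorem mu_ratio_bounds_for_log_convex_means
    {H K : Type*} [NormedAddCommGroup H] [InnerProductSpace ℂ H] [CompleteSpace H]
    [NormedAddCommGroup K] [InnerProductSpace ℂ K] [CompleteSpace K]
    (m M : ℝ) (hm : 0 < m) (hmM : m < M)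
    (A B : H →L[ℂ] H) (hA : 0 ≤ A) (hAu : IsUnit A) (hB : 0 ≤ B) (hBu : IsUnit B)
    (hmAB : m • A ≤ B) (hBMA : B ≤ M • A)
    (f : ℝ → ℝ) (hf_cont : ContinuousOn f (Set.Icc m M))
    (hf_pos : ∀ t ∈ Set.Icc m M, 0 < f t)
    (hf_logconv : ConvexOn ℝ (Set.Icc m M) (fun t => Real.log (f t)))
    (φ : (H →L[ℂ] H) →ₗ[ℂ] (K →L[ℂ] K))
    (hφ_pos : ∀ X : H →L[ℂ] H, 0 ≤ X → 0 ≤ φ X)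
    (hφA : 0 ≤ φ A) (hφAu : IsUnit (φ A))
    (μ : ℝ)
    (hμ : IsGreatest
      ((fun t => (((M - t) * f m + (t - m) * f M) / (M - m)) / f t) '' Set.Icc m M) μ) :
    μ⁻¹ • φ (opSigma f A B) ≤
        μ⁻¹ • φ (opSqrt A *
          cfc (fun t : ℝ => (f M ^ (t - m) * f m ^ (M - t)) ^ (1 / (M - m))) (opDelta A B) *
          opSqrt A) ∧
      μ⁻¹ • φ (opSqrt A *
          cfc (fun t : ℝ => (f M ^ (t - m) * f m ^ (M - t)) ^ (1 / (M - m))) (opDelta A B) *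
          opSqrt A) ≤
        opSigma f (φ A) (φ B) ∧
      opSigma f (φ A) (φ B) ≤
        opSqrt (φ A) *
          cfc (fun t : ℝ => (f M ^ (t - m) * f m ^ (M - t)) ^ (1 / (M - m)))
            (opDelta (φ A) (φ B)) *
          opSqrt (φ A) ∧
      opSqrt (φ A) *
          cfc (fun t : ℝ => (f M ^ (t - m) * f m ^ (M - t)) ^ (1 / (M - m)))
            (opDelta (φ A) (φ B)) *
          opSqrt (φ A) ≤
        μ • φ (opSigma f A B) := by
  have hfm := hf_pos m (Set.left_mem_Icc.2 hmM.le)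
  have hfM := hf_pos M (Set.right_mem_Icc.2 hmM.le)
  have hd : 0 < M - m := sub_pos.2 hmM
  have hμ_pos : 0 < μ := by
    obtain ⟨t, ht, rfl⟩ := hμ.1
    exact div_pos ((Real.rpow_pos_of_pos (by positivity) _).trans_le
      (logInterp_le_chord hmM hfm hfM ht)) (hf_pos t ht)
  have hφ_mono : ∀ X Y : H →L[ℂ] H, X ≤ Y → φ X ≤ φ Y := fun X Y h => by
    simpa using hφ_pos (Y - X) (sub_nonneg.2 h)
  have hφ_smul : ∀ (r : ℝ) (X : H →L[ℂ] H), φ (r • X) = r • φ X :=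
    fun r X => φ.map_smul_of_tower r X
  have hφB := hφ_pos B hB
  have hmφ : m • φ A ≤ φ B := hφ_smul m A ▸ hφ_mono _ _ hmAB
  have hφM : φ B ≤ M • φ A := hφ_smul M A ▸ hφ_mono _ _ hBMA
  set g : ℝ → ℝ := fun t => (f M ^ (t - m) * f m ^ (M - t)) ^ (1 / (M - m)) with hg
  -- the chord of `f`, in slope-intercept form
  obtain ⟨L, a, b, hL, hLab⟩ : ∃ (L : ℝ → ℝ) (a b : ℝ), L = (fun t => a * t + b) ∧
      ∀ t, L t = ((M - t) * f m + (t - m) * f M) / (M - m) :=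
    ⟨_, (f M - f m) / (M - m), (M * f m - m * f M) / (M - m), rfl, fun t => by ring⟩
  have hg_cont : ContinuousOn g (Set.Icc m M) := (continuous_logInterp hfm hfM).continuousOn
  have hL_cont : ContinuousOn L (Set.Icc m M) := by rw [hL]; fun_prop
  have hμf_cont : ContinuousOn (fun t => μ * f t) (Set.Icc m M) := hf_cont.const_mul μ
  have hfg : ∀ t ∈ Set.Icc m M, f t ≤ g t := fun t ht => le_logInterp hmM hf_pos hf_logconv ht
  have hgL : ∀ t ∈ Set.Icc m M, g t ≤ L t := fun t ht =>
    (hLab t).symm ▸ logInterp_le_chord hmM hfm hfM ht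
  have hLμ : ∀ t ∈ Set.Icc m M, L t ≤ μ * f t := fun t ht => by
    rw [hLab, ← div_le_iff₀ (hf_pos t ht)]
    exact hμ.2 (Set.mem_image_of_mem _ ht)
  have hφL : φ (opSigma L A B) = opSigma L (φ A) (φ B) := by
    rw [hL, opSigma_affine hA hAu hB, opSigma_affine hφA hφAu hφB, map_add, hφ_smul, hφ_smul]
  have hL_le : opSigma L A B ≤ μ • opSigma f A B := by
    rw [← opSigma_const_mul hA hAu hB hmAB hBMA hf_cont]
    exact opSigma_mono hA hAu hB hmAB hBMA hL_cont hμf_cont hLμ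
  have hφL_le : opSigma L (φ A) (φ B) ≤ μ • opSigma f (φ A) (φ B) := by
    rw [← opSigma_const_mul hφA hφAu hφB hmφ hφM hf_cont]
    exact opSigma_mono hφA hφAu hφB hmφ hφM hL_cont hμf_cont hLμ
  change μ⁻¹ • φ (opSigma f A B) ≤ μ⁻¹ • φ (opSigma g A B) ∧
    μ⁻¹ • φ (opSigma g A B) ≤ opSigma f (φ A) (φ B) ∧
    opSigma f (φ A) (φ B) ≤ opSigma g (φ A) (φ B) ∧
    opSigma g (φ A) (φ B) ≤ μ • φ (opSigma f A B)
  refine ⟨?_, ?_, opSigma_mono hφA hφAu hφB hmφ hφM hf_cont hg_cont hfg, ?_⟩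
  · exact smul_le_smul_of_nonneg_left
      (hφ_mono _ _ (opSigma_mono hA hAu hB hmAB hBMA hf_cont hg_cont hfg)) (inv_pos.2 hμ_pos).le
  · have h : φ (opSigma g A B) ≤ μ • opSigma f (φ A) (φ B) :=
      (hφ_mono _ _ (opSigma_mono hA hAu hB hmAB hBMA hg_cont hL_cont hgL)).trans
        (hφL.trans_le hφL_le)
    have h' := smul_le_smul_of_nonneg_left h (inv_pos.2 hμ_pos).le
    rwa [inv_smul_smul₀ hμ_pos.ne'] at h'
  · rw [← hφ_smul]
    exact (opSigma_mono hφA hφAu hφB hmφ hφM hg_cont hL_cont hgL).trans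
      (hφL.symm.trans_le (hφ_mono _ _ hL_le))
end

section
/- Let 0 < m < M, let A be a positive bounded operator on a complex Hilbert space H with mI ≤ A ≤ MI, and let φ : B(H) → B(K) be a normalized positive linear map. Then φ(A^{-1}) ≤ (φ(A))^{-1} + (1/√m − 1/√M)²·I. -/
/-! The chord of `t ↦ 1 / t` over `[m, M]` lies above the graph, so
`A⁻¹ ≤ (1 / m + 1 / M) - A / (m M)`; operatorially this is the positivity of the product of the
commuting positive operators `A - m`, `M - A` and `A⁻¹` (`ring_inverse_le_chord`). A unital positive
map preserves this inequality, and what remains is to compare the chord with the inverse at the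
strictly positive operator `B = φ A`. With `c = 1 / √(m M)`, the gap is
`B⁻¹ - 2 c + c² B = (1 - c B) B⁻¹ (1 - c B) ≥ 0` (`two_smul_le_inverse_add`), and
`1 / m + 1 / M - 2 c = (1 / √m - 1 / √M)²`. -/

section

variable {E : Type*} [NormedAddCommGroup E] [InnerProductSpace ℂ E] [CompleteSpace E]

lemma isStrictlyPositive_of_smul_one_le {B : E →L[ℂ] E} {m : ℝ} (hm : 0 < m)
    (hB : m • (1 : E →L[ℂ] E) ≤ B) : IsStrictlyPositive B := by
  refine IsStrictlyPositive.of_le ?_ hB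
  exact IsStrictlyPositive.smul hm isStrictlyPositive_one

lemma ring_inverse_nonneg {B : E →L[ℂ] E} (hB : IsStrictlyPositive B) : 0 ≤ Ring.inverse B := by
  obtain ⟨u, rfl⟩ := hB.isUnit
  rw [Ring.inverse_unit]
  exact CFC.inv_nonneg_of_nonneg u hB.nonneg

/-- The operator form of `1 / t ≤ 1 / m + 1 / M - t / (m M)` on `[m, M]`. -/
lemma ring_inverse_le_chord {A : E →L[ℂ] E} {m M : ℝ} (hm : 0 < m) (hM : 0 < M)
    (hA₁ : m • (1 : E →L[ℂ] E) ≤ A) (hA₂ : A ≤ M • (1 : E →L[ℂ] E)) :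
    Ring.inverse A ≤ (1 / m + 1 / M) • (1 : E →L[ℂ] E) - (1 / (m * M)) • A := by
  have hA := isStrictlyPositive_of_smul_one_le hm hA₁
  have hinv := ring_inverse_nonneg hA
  have h1 : A * Ring.inverse A = 1 := Ring.mul_inverse_cancel _ hA.isUnit
  have h2 : Ring.inverse A * A = 1 := Ring.inverse_mul_cancel _ hA.isUnit
  set V := Ring.inverse A
  have hP : 0 ≤ (A - m • (1 : E →L[ℂ] E)) * (M • (1 : E →L[ℂ] E) - A) := by
    refine Commute.mul_nonneg (sub_nonneg.2 hA₁) (sub_nonneg.2 hA₂) ?_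
    simp only [commute_iff_eq, sub_mul, mul_sub, smul_mul_assoc, mul_smul_comm, one_mul, mul_one]
    module
  have hQ : 0 ≤ (A - m • (1 : E →L[ℂ] E)) * (M • (1 : E →L[ℂ] E) - A) * V := by
    refine Commute.mul_nonneg hP hinv ?_
    have hAV : Commute A V := h1.trans h2.symm
    have hs (r : ℝ) : Commute (r • (1 : E →L[ℂ] E)) V := (Commute.one_left V).smul_left r
    exact (hAV.sub_left (hs m)).mul_left ((hs M).sub_left hAV)
  have hE : (A - m • (1 : E →L[ℂ] E)) * (M • (1 : E →L[ℂ] E) - A) * V =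
      (m + M) • (1 : E →L[ℂ] E) - A - (m * M) • V := by
    simp only [sub_mul, mul_sub, smul_mul_assoc, mul_smul_comm, one_mul, mul_one, mul_assoc, h1]
    module
  rw [hE] at hQ
  have hR := smul_nonneg (show 0 ≤ 1 / (m * M) by positivity) hQ
  rw [← sub_nonneg]
  convert hR using 1
  match_scalars <;> field_simp
  ring

/-- The operator form of the inequality `2 c ≤ 1 / t + c² t`. -/
lemma two_smul_le_inverse_add {B : E →L[ℂ] E} (hB : IsStrictlyPositive B) (c : ℝ) :
    (2 * c) • (1 : E →L[ℂ] E) ≤ Ring.inverse B + (c ^ 2) • B := by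
  have hinv := ring_inverse_nonneg hB
  have h1 : B * Ring.inverse B = 1 := Ring.mul_inverse_cancel _ hB.isUnit
  have h2 : Ring.inverse B * B = 1 := Ring.inverse_mul_cancel _ hB.isUnit
  have hsa : IsSelfAdjoint (1 - c • B) :=
    (IsSelfAdjoint.one _).sub ((IsSelfAdjoint.all c).smul hB.isSelfAdjoint)
  have h := hsa.conjugate_nonneg hinv
  have hE : (1 - c • B) * Ring.inverse B * (1 - c • B) =
      Ring.inverse B + (c ^ 2) • B - (2 * c) • (1 : E →L[ℂ] E) := by
    simp only [sub_mul, mul_sub, smul_mul_assoc, mul_smul_comm, one_mul, mul_one, h1, h2]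
    module
  rwa [hE, sub_nonneg] at h

end

theorem additive_reverse_for_inverse
    {H K : Type*} [NormedAddCommGroup H] [InnerProductSpace ℂ H] [CompleteSpace H]
    [NormedAddCommGroup K] [InnerProductSpace ℂ K] [CompleteSpace K]
    (m M : ℝ) (hm : 0 < m) (hmM : m < M)
    (A : H →L[ℂ] H) (hA : 0 ≤ A)
    (hA₁ : m • (1 : H →L[ℂ] H) ≤ A) (hA₂ : A ≤ M • (1 : H →L[ℂ] H))
    (φ : (H →L[ℂ] H) →ₗ[ℂ] (K →L[ℂ] K))
    (hφ_pos : ∀ X : H →L[ℂ] H, 0 ≤ X → 0 ≤ φ X)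
    (hφ_one : φ 1 = 1) :
    φ (Ring.inverse A) ≤
      Ring.inverse (φ A) + ((1 / Real.sqrt m - 1 / Real.sqrt M) ^ 2) • 1 := by
  have hM : 0 < M := hm.trans hmM
  have hmono {X Y : H →L[ℂ] H} (h : X ≤ Y) : φ X ≤ φ Y := by
    simpa using hφ_pos _ (sub_nonneg.2 h)
  have hsmul (r : ℝ) (X : H →L[ℂ] H) : φ (r • X) = r • φ X := φ.map_smul_of_tower r X
  have hB : IsStrictlyPositive (φ A) := by
    refine isStrictlyPositive_of_smul_one_le hm ?_
    simpa only [hsmul, hφ_one] using hmono hA₁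
  have hchord := hmono (ring_inverse_le_chord hm hM hA₁ hA₂)
  rw [map_sub, hsmul, hsmul, hφ_one] at hchord
  have hgap := two_smul_le_inverse_add hB (1 / (√m * √M))
  have hsm : √m ^ 2 = m := Real.sq_sqrt hm.le
  have hsM : √M ^ 2 = M := Real.sq_sqrt hM.le
  have hc2 : (1 / (√m * √M)) ^ 2 = 1 / (m * M) := by
    rw [div_pow, mul_pow, hsm, hsM, one_pow]
  have hconst : (1 / √m - 1 / √M) ^ 2 = (1 / m + 1 / M) - 2 * (1 / (√m * √M)) := by
    have e1 : 1 / m = (1 / √m) ^ 2 := by rw [div_pow, hsm, one_pow]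
    have e2 : 1 / M = (1 / √M) ^ 2 := by rw [div_pow, hsM, one_pow]
    rw [e1, e2, ← one_div_mul_one_div]
    ring
  rw [hc2] at hgap
  rw [hconst]
  refine hchord.trans ?_
  rw [← sub_nonneg] at hgap ⊢
  convert hgap using 1
  module
end

section
/- Let 0 < m < M, let A be a positive bounded operator on a complex Hilbert space H with mI ≤ A ≤ MI, and let φ : B(H) → B(K) be a normalized positive linear map. Then φ(A^{-1}) ≤ ((M + m)²/(4mM)) · (φ(A))^{-1}. -/
/-!
The scalar inequality `(M - t) (t - m) / t ≥ 0` on `[m, M]` becomes, for the operator `A`, the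
chord bound `m M A⁻¹ ≤ (M + m) - A` (`inverse_le_chord`). Applying `φ`, with `B = φ(A)`, gives
`m M φ(A⁻¹) ≤ (M + m) - B`. Since `(t - s)² / t ≥ 0` with `s = (M + m) / 2`, also
`(M + m) - B ≤ ((M + m)² / 4) B⁻¹` (`tangent_le_inverse`). Dividing by `m M` gives the claim.
-/

section CStar

variable {𝒜 : Type*} [CStarAlgebra 𝒜] [PartialOrder 𝒜] [StarOrderedRing 𝒜]

lemma ringInverse_nonneg_of_isStrictlyPositive {a : 𝒜} (ha : IsStrictlyPositive a) :
    0 ≤ Ring.inverse a := by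
  have hs : star (Ring.inverse a) = Ring.inverse a := by
    rw [← Ring.inverse_star, ha.isSelfAdjoint.star_eq]
  have h := star_left_conjugate_nonneg ha.nonneg (Ring.inverse a)
  rwa [hs, Ring.inverse_mul_cancel a ha.isUnit, one_mul] at h

lemma isStrictlyPositive_of_smul_one_le_s11 {m : ℝ} (hm : 0 < m) {a : 𝒜}
    (h : m • (1 : 𝒜) ≤ a) : IsStrictlyPositive a :=
  (isStrictlyPositive_one.smul hm).of_le h

/-- On `[m, M]` the inverse lies below its chord. -/
lemma inverse_le_chord {m M : ℝ} (hm : 0 < m) {a : 𝒜}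
    (h₁ : m • (1 : 𝒜) ≤ a) (h₂ : a ≤ M • (1 : 𝒜)) :
    (m * M) • Ring.inverse a ≤ (M + m) • (1 : 𝒜) - a := by
  have ha := isStrictlyPositive_of_smul_one_le_s11 hm h₁
  have hc := ringInverse_nonneg_of_isStrictlyPositive ha
  have hac := Ring.mul_inverse_cancel a ha.isUnit
  have hca := Ring.inverse_mul_cancel a ha.isUnit
  generalize Ring.inverse a = c at *
  have comm : Commute (M • (1 : 𝒜) - a) (a - m • (1 : 𝒜)) := by
    simp only [commute_iff_eq, sub_mul, mul_sub, smul_mul_assoc, mul_smul_comm, one_mul, mul_one]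
    module
  have h := Commute.mul_nonneg (sub_nonneg.2 h₂) (sub_nonneg.2 h₁) comm
  have comm' : Commute ((M • (1 : 𝒜) - a) * (a - m • (1 : 𝒜))) c := by
    have hcomm : Commute a c := hac.trans hca.symm
    exact ((((Commute.one_left c).smul_left M).sub_left hcomm).mul_left
      (hcomm.sub_left ((Commute.one_left c).smul_left m)))
  have h' := Commute.mul_nonneg h hc comm'
  rw [← sub_nonneg]
  convert h' using 1
  simp only [sub_mul, mul_sub, smul_mul_assoc, mul_smul_comm, one_mul, mul_one, mul_assoc,
    hac, smul_sub, smul_smul]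
  module

/-- The inverse, scaled by `s²`, lies above its tangent line at `s`. -/
lemma tangent_le_inverse (s : ℝ) {b : 𝒜} (hb : IsStrictlyPositive b) :
    (2 * s) • (1 : 𝒜) - b ≤ (s ^ 2) • Ring.inverse b := by
  have hc := ringInverse_nonneg_of_isStrictlyPositive hb
  have hbc := Ring.mul_inverse_cancel b hb.isUnit
  have hcb := Ring.inverse_mul_cancel b hb.isUnit
  generalize Ring.inverse b = c at *
  have h := star_left_conjugate_nonneg hc (b - s • (1 : 𝒜))
  rw [star_sub, hb.isSelfAdjoint.star_eq, star_smul, star_one, star_trivial] at h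
  rw [← sub_nonneg]
  convert h using 1
  simp only [sub_mul, mul_sub, smul_mul_assoc, mul_smul_comm, one_mul, mul_one,
    hbc, hcb, smul_sub, smul_smul]
  module

end CStar

theorem multiplicative_reverse_for_inverse
    {H K : Type*} [NormedAddCommGroup H] [InnerProductSpace ℂ H] [CompleteSpace H]
    [NormedAddCommGroup K] [InnerProductSpace ℂ K] [CompleteSpace K]
    (m M : ℝ) (hm : 0 < m) (hmM : m < M)
    (A : H →L[ℂ] H) (hA : 0 ≤ A)
    (hA₁ : m • (1 : H →L[ℂ] H) ≤ A) (hA₂ : A ≤ M • (1 : H →L[ℂ] H))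
    (φ : (H →L[ℂ] H) →ₗ[ℂ] (K →L[ℂ] K))
    (hφ_pos : ∀ X : H →L[ℂ] H, 0 ≤ X → 0 ≤ φ X)
    (hφ_one : φ 1 = 1) :
    φ (Ring.inverse A) ≤ ((M + m) ^ 2 / (4 * m * M)) • Ring.inverse (φ A) := by
  have hM : 0 < M := hm.trans hmM
  have hsmul (r : ℝ) (X : H →L[ℂ] H) : φ (r • X) = r • φ X := φ.map_smul_of_tower r X
  have hmono {X Y : H →L[ℂ] H} (h : X ≤ Y) : φ X ≤ φ Y := by
    simpa [sub_nonneg] using hφ_pos (Y - X) (sub_nonneg.2 h)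
  have hB : m • (1 : K →L[ℂ] K) ≤ φ A := by
    simpa only [hsmul, hφ_one] using hmono hA₁
  have h1 := hmono (inverse_le_chord hm hA₁ hA₂)
  rw [map_sub, hsmul, hsmul, hφ_one] at h1
  have h2 := tangent_le_inverse ((M + m) / 2) (isStrictlyPositive_of_smul_one_le_s11 hm hB)
  rw [mul_div_cancel₀ (M + m) two_ne_zero] at h2
  have h3 := smul_le_smul_of_nonneg_left (h1.trans h2) (inv_nonneg.2 (mul_pos hm hM).le)
  rw [smul_smul, smul_smul, inv_mul_cancel₀ (mul_pos hm hM).ne', one_smul] at h3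
  convert h3 using 2
  field_simp
  ring
end
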